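/- arXiv:2504.19054 — 3 statements merged into one kernel-verified Lean document; each statement's English description precedes it below -/
import Mathlib

section
/- Let M ∈ ℝ^{n×n} be an invertible RDDL matrix and let S ⊆ [n] be a nonempty subset. Then the principal submatrix M_{S,S} is an invertible RDDL matrix, and every entry of (M_{S,S})^{-1} is nonnegative. -/
open Matrix

/-- A matrix `M` (over any finite index type) is an RDDL matrix. -/
def IsRDDL {ι : Type*} [Fintype ι] [DecidableEq ι] (M : Matrix ι ι ℝ) : Prop :=
  (∀ i, 0 < M i i) ∧ (∀ i j, i ≠ j → M i j ≤ 0) ∧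
    (∀ i, ∑ j ∈ Finset.univ.erase i, |M i j| ≤ M i i)

/-- The submatrix `M_{S,T}` of `M` with rows indexed by `S` and columns indexed by `T`. -/
def submatrixOn {n : ℕ} (M : Matrix (Fin n) (Fin n) ℝ) (S T : Finset (Fin n)) :
    Matrix {i // i ∈ S} {j // j ∈ T} ℝ :=
  Matrix.of fun i j => M i.val j.val

/-!
An invertible RDDL matrix `M` has nonnegative row sums, so `z = c • 1 + M⁻¹ 1` with `c` large is a
positive vector with positive image `M z`. Passing to a principal submatrix only removes nonpositive
terms from `M z`, so the restriction of `z` is still positive with positive image. For a matrix `A`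
with nonpositive off-diagonal entries, such a vector forces `A x ≥ 0` to imply `x ≥ 0`: compare `x`
with the multiple of `z` lying below `x` and touching it, at an index minimizing `x i / z i`. This
implication gives both the injectivity of `A` and the nonnegativity of the columns of `A⁻¹`.
-/

section Definitions

variable {m n R : Type*} [Fintype n]

/-- A Z-matrix: all off-diagonal entries are nonpositive. No condition is put on the diagonal. -/
def IsZMatrix [Zero R] [LE R] (A : Matrix m m R) : Prop :=
  Pairwise fun i j => A i j ≤ 0

/-- A semipositive matrix: it maps some entrywise positive vector to an entrywise positive vector.
For Z-matrices this characterizes the nonsingular M-matrices. -/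
def IsSemipositive [NonUnitalNonAssocSemiring R] [LT R] (A : Matrix m n R) : Prop :=
  ∃ z, (∀ j, 0 < z j) ∧ ∀ i, 0 < (A *ᵥ z) i

/-- A matrix of monotone kind, in the sense of Collatz: the map `x ↦ A x` reflects entrywise
nonnegativity. Over an ordered field, the square ones are the invertible matrices with nonnegative
inverse. -/
def IsMonotoneKind [NonUnitalNonAssocSemiring R] [LE R] (A : Matrix m n R) : Prop :=
  ∀ x, 0 ≤ A *ᵥ x → 0 ≤ x

end Definitions

namespace IsZMatrix

section Ring

variable {ι κ R : Type*} [Fintype ι] [Fintype κ] [Ring R] [PartialOrder R] [IsOrderedRing R]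
  {A : Matrix ι ι R}

theorem mulVec_apply_le_of_le_of_eq (hA : IsZMatrix A) {x y : ι → R} (hyx : y ≤ x) {i : ι}
    (hi : y i = x i) : (A *ᵥ x) i ≤ (A *ᵥ y) i := by
  refine Finset.sum_le_sum fun j _ => ?_
  obtain rfl | hij := eq_or_ne i j
  · rw [hi]
  · exact mul_le_mul_of_nonpos_left (hyx j) (hA hij)

theorem mulVec_apply_le_submatrix_mulVec (hA : IsZMatrix A) (e : κ ↪ ι) {z : ι → R} (hz : 0 ≤ z)
    (k : κ) : (A *ᵥ z) (e k) ≤ (A.submatrix e e *ᵥ (z ∘ e)) k :=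
  calc
    (A *ᵥ z) (e k) ≤ ∑ i ∈ Finset.univ.map e, A (e k) i * z i := by
      refine Finset.sum_le_sum_of_subset_of_nonpos' (Finset.subset_univ _) fun i _ hi => ?_
      have hki : e k ≠ i := fun h => hi (h ▸ Finset.mem_map_of_mem e (Finset.mem_univ k))
      exact mul_nonpos_of_nonpos_of_nonneg (hA hki) (hz i)
    _ = (A.submatrix e e *ᵥ (z ∘ e)) k := Finset.sum_map _ _ _

theorem isSemipositive_submatrix (hA : IsZMatrix A) (hs : IsSemipositive A) (e : κ ↪ ι) :
    IsSemipositive (A.submatrix e e) := by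
  obtain ⟨z, hz, hAz⟩ := hs
  exact ⟨z ∘ e, fun k => hz (e k), fun k =>
    (hAz (e k)).trans_le (hA.mulVec_apply_le_submatrix_mulVec e (fun i => (hz i).le) k)⟩

end Ring

theorem submatrix {ι κ R : Type*} [Zero R] [LE R] {A : Matrix ι ι R} (hA : IsZMatrix A)
    (e : κ ↪ ι) : IsZMatrix (A.submatrix e e) :=
  fun _ _ hkl => hA (e.injective.ne hkl)

theorem isMonotoneKind {ι 𝕜 : Type*} [Fintype ι] [Field 𝕜] [LinearOrder 𝕜]
    [IsStrictOrderedRing 𝕜] {A : Matrix ι ι 𝕜} (hA : IsZMatrix A) (hs : IsSemipositive A) :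
    IsMonotoneKind A := by
  obtain ⟨z, hz, hAz⟩ := hs
  intro x hAx k
  by_contra! hk
  have : Nonempty ι := ⟨k⟩
  obtain ⟨i, hi⟩ := Finite.exists_min fun j => x j / z j
  set t := x i / z i
  have ht : t < 0 := (hi k).trans_lt (div_neg_of_neg_of_pos hk (hz k))
  have below : t • z ≤ x := fun j => (le_div_iff₀ (hz j)).mp (hi j)
  have touch : (t • z) i = x i := div_mul_cancel₀ _ (hz i).ne'
  have image_neg : (A *ᵥ x) i < 0 :=
    calc
      (A *ᵥ x) i ≤ (A *ᵥ (t • z)) i := hA.mulVec_apply_le_of_le_of_eq below touch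
      _ = t * (A *ᵥ z) i := by rw [mulVec_smul, Pi.smul_apply, smul_eq_mul]
      _ < 0 := mul_neg_of_neg_of_pos ht (hAz i)
  exact image_neg.not_ge (hAx i)

end IsZMatrix

namespace IsMonotoneKind

theorem mulVec_injective {m n R : Type*} [Fintype n] [Ring R] [PartialOrder R]
    [IsOrderedAddMonoid R] {A : Matrix m n R} (hA : IsMonotoneKind A) :
    Function.Injective A.mulVec := by
  have le_of_mulVec_eq {x y : n → R} (h : A *ᵥ x = A *ᵥ y) : x ≤ y :=
    sub_nonneg.mp (hA _ (by rw [mulVec_sub, h, sub_self]))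
  exact fun x y h => (le_of_mulVec_eq h).antisymm (le_of_mulVec_eq h.symm)

theorem inv_nonneg {n R : Type*} [Fintype n] [DecidableEq n] [CommRing R] [Preorder R]
    [ZeroLEOneClass R] {A : Matrix n n R} (hA : IsMonotoneKind A) (hInv : IsUnit A) (i j : n) :
    0 ≤ A⁻¹ i j := by
  refine hA (A⁻¹.col j) (fun k => ?_) i
  change 0 ≤ (A * A⁻¹) k j
  rw [mul_nonsing_inv A ((isUnit_iff_isUnit_det A).mp hInv), one_apply]
  split_ifs
  exacts [zero_le_one, le_rfl]

end IsMonotoneKind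

theorem isSemipositive_of_isUnit_of_mulVec_nonneg {n 𝕜 : Type*} [Fintype n] [DecidableEq n]
    [Field 𝕜] [LinearOrder 𝕜] [IsStrictOrderedRing 𝕜] {A : Matrix n n 𝕜} (hInv : IsUnit A)
    {u : n → 𝕜} (hu : ∀ i, 0 < u i) (hAu : 0 ≤ A *ᵥ u) : IsSemipositive A := by
  obtain ⟨w, hw⟩ : ∃ w, A *ᵥ w = 1 := mulVec_surjective_iff_isUnit.mpr hInv 1
  obtain ⟨c, hc, hcw⟩ : ∃ c : 𝕜, 0 ≤ c ∧ ∀ i, -w i / u i < c :=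
    ((Filter.eventually_ge_atTop 0).and
      (Filter.eventually_all.mpr fun i => Filter.eventually_gt_atTop (-w i / u i))).exists
  refine ⟨c • u + w, fun i => ?_, fun i => ?_⟩
  · exact neg_lt_iff_pos_add.mp ((div_lt_iff₀ (hu i)).mp (hcw i))
  · rw [mulVec_add, mulVec_smul, hw]
    exact add_pos_of_nonneg_of_pos (mul_nonneg hc (hAu i)) one_pos

namespace IsRDDL

variable {ι κ : Type*} [Fintype ι] [DecidableEq ι] [Fintype κ] [DecidableEq κ]
  {M : Matrix ι ι ℝ}

theorem isZMatrix (hM : IsRDDL M) : IsZMatrix M :=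
  fun i j hij => hM.2.1 i j hij

theorem mulVec_one_nonneg (hM : IsRDDL M) : 0 ≤ M *ᵥ 1 := by
  intro i
  calc
    0 ≤ M i i + -∑ j ∈ Finset.univ.erase i, |M i j| := by linarith [hM.2.2 i]
    _ ≤ M i i + ∑ j ∈ Finset.univ.erase i, M i j := by
      rw [← Finset.sum_neg_distrib]
      gcongr
      exact neg_abs_le _
    _ = (M *ᵥ 1) i := by
      simp only [Finset.add_sum_erase _ _ (Finset.mem_univ i), mulVec, dotProduct_one]

theorem submatrix (hM : IsRDDL M) (e : κ ↪ ι) : IsRDDL (M.submatrix e e) := by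
  refine ⟨fun k => hM.1 (e k), fun k l hkl => hM.isZMatrix.submatrix e hkl, fun k => ?_⟩
  calc
    ∑ l ∈ Finset.univ.erase k, |M (e k) (e l)|
        = ∑ i ∈ (Finset.univ.map e).erase (e k), |M (e k) i| := by
      rw [← Finset.map_erase, Finset.sum_map]
    _ ≤ ∑ i ∈ Finset.univ.erase (e k), |M (e k) i| := by
      gcongr
      exact Finset.subset_univ _
    _ ≤ M (e k) (e k) := hM.2.2 (e k)

theorem isSemipositive (hM : IsRDDL M) (hInv : IsUnit M) : IsSemipositive M :=
  isSemipositive_of_isUnit_of_mulVec_nonneg hInv (fun _ => one_pos) hM.mulVec_one_nonneg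

end IsRDDL

theorem rddl_principal_submatrix_general {ι κ : Type*} [Fintype ι] [DecidableEq ι] [Fintype κ]
    [DecidableEq κ] {M : Matrix ι ι ℝ} (hM : IsRDDL M) (hInv : IsUnit M) (e : κ ↪ ι) :
    IsRDDL (M.submatrix e e) ∧ IsUnit (M.submatrix e e) ∧
      ∀ k l, 0 ≤ (M.submatrix e e)⁻¹ k l := by
  have hZ : IsZMatrix M := hM.isZMatrix
  have hmono : IsMonotoneKind (M.submatrix e e) :=
    (hZ.submatrix e).isMonotoneKind (hZ.isSemipositive_submatrix (hM.isSemipositive hInv) e)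
  have hunit : IsUnit (M.submatrix e e) := mulVec_injective_iff_isUnit.mp hmono.mulVec_injective
  exact ⟨hM.submatrix e, hunit, hmono.inv_nonneg hunit⟩

/-- For an invertible RDDL matrix `M` and a nonempty subset `S` of the indices, the
principal submatrix `M_{S,S}` is an invertible RDDL matrix whose inverse is entrywise
nonnegative. -/
theorem rddl_principal_submatrix {n : ℕ}
    (M : Matrix (Fin n) (Fin n) ℝ) (hM : IsRDDL M) (hInv : IsUnit M)
    (S : Finset (Fin n)) (hS : S.Nonempty) :
    IsRDDL (submatrixOn M S S) ∧ IsUnit (submatrixOn M S S) ∧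
      ∀ i j, 0 ≤ (submatrixOn M S S)⁻¹ i j :=
  rddl_principal_submatrix_general hM hInv (Function.Embedding.subtype (· ∈ S))
end

section
/- Let L ∈ ℝ^{n×n} be an invertible SDDM matrix with integer entries in [−U, U] for some integer U ≥ 1, let b ∈ ℝ^n, and let x := L^{-1}b. Let θ > 0 and C ⊆ [n] be such that |x_i| ≤ θ for all i ∈ C, and set F := [n] \ C. Let y ∈ ℝ^n be the vector with y_F = (L_{F,F})^{-1} b_F and y_C = 0. Then ‖y − x‖₂ ≤ n³·U·θ. -/
/-!
Let `F = [n] \ C` and `d = y - x`. Then `L d` vanishes on `F`, while `|d| = |x| ≤ θ` on `C`, so a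
maximum principle gives `|d| ≤ θ` everywhere and hence `‖d‖₂ ≤ √n θ`.

For the maximum principle, let `S` be the set of indices where `|d|` is maximal. If `L d` vanished
on all of `S`, then diagonal dominance would be tight in those rows, forcing `L` to have no entries
from `S` to its complement. Thus `L` is block triangular, and its diagonal block on `S` kills the
nonzero vector `d_S`, so `L` is singular.
-/

open Matrix

/-- The ℓ₂ norm of a vector. -/
noncomputable def l2norm {n : ℕ} (v : Fin n → ℝ) : ℝ := Real.sqrt (∑ i, (v i) ^ 2)

open Finset

section LinearSystems

variable {m n l R : Type*} [Fintype n]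

lemma submatrix_mulVec_restrict [NonUnitalNonAssocSemiring R] (A : Matrix m n R) (e : l → m)
    {F : Finset n} {v : n → R} {i : l} (h : ∀ j ∉ F, A (e i) j * v j = 0) :
    (A.submatrix e Subtype.val *ᵥ fun j : F => v j) i = (A *ᵥ v) (e i) :=
  calc
    _ = ∑ j ∈ F, A (e i) j * v j := F.sum_coe_sort fun j => A (e i) j * v j
    _ = ∑ j, A (e i) j * v j := sum_subset F.subset_univ fun j _ => h j

lemma det_eq_zero_of_block_mulVec_eq_zero [DecidableEq n] [CommRing R] [IsDomain R]
    {A : Matrix n n R} {S : Finset n} {v : n → R} (hblock : ∀ i ∈ S, ∀ j ∉ S, A i j = 0)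
    (hAv : ∀ i ∈ S, (A *ᵥ v) i = 0) (hv : ∃ i ∈ S, v i ≠ 0) : A.det = 0 := by
  have hker : A.toSquareBlockProp (· ∈ S) *ᵥ (fun j => v j) = 0 := funext fun i =>
    (submatrix_mulVec_restrict A Subtype.val fun j hj => by
      rw [hblock i i.2 j hj, zero_mul]).trans (hAv i i.2)
  have hvS : (fun j : S => v j) ≠ 0 :=
    let ⟨i, hi, hvi⟩ := hv
    fun h => hvi (congrFun h ⟨i, hi⟩)
  have hdetS : (A.toSquareBlockProp (· ∈ S)).det = 0 := exists_mulVec_eq_zero_iff.1 ⟨_, hvS, hker⟩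
  rw [twoBlockTriangular_det' A (· ∈ S) hblock]
  refine mul_eq_zero_of_left ?_ _
  convert hdetS

lemma mulVec_inv_mulVec [DecidableEq n] [CommRing R] {A : Matrix n n R} (hA : IsUnit A)
    (b : n → R) : A *ᵥ (A⁻¹ *ᵥ b) = b := by
  rw [mulVec_mulVec, mul_nonsing_inv _ ((isUnit_iff_isUnit_det A).1 hA), one_mulVec]

end LinearSystems

section DiagonalDominance

variable {ι 𝕜 : Type*} [Fintype ι] [DecidableEq ι] [NormedField 𝕜]

/-- Weak row diagonal dominance: in each row, the diagonal entry is at least as large in norm as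
all the other entries together. Invertible matrices with this property satisfy a maximum principle
in norm, whatever the signs of their entries. -/
def IsRowDiagDominant (A : Matrix ι ι 𝕜) : Prop :=
  ∀ i, ∑ j ∈ univ.erase i, ‖A i j‖ ≤ ‖A i i‖

lemma IsRDDL.isRowDiagDominant {A : Matrix ι ι ℝ} (hA : IsRDDL A) : IsRowDiagDominant A :=
  fun i => (hA.2.2 i).trans (le_abs_self _)

variable {A : Matrix ι ι 𝕜}

namespace IsRowDiagDominant

lemma apply_eq_zero_of_norm_lt (hA : IsRowDiagDominant A) {d : ι → 𝕜} {i j : ι}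
    (hmax : ∀ k, ‖d k‖ ≤ ‖d i‖) (hi : (A *ᵥ d) i = 0) (hj : ‖d j‖ < ‖d i‖) : A i j = 0 := by
  have hdiag : ‖A i i‖ * ‖d i‖ ≤ ∑ k ∈ univ.erase i, ‖A i k‖ * ‖d k‖ := by
    have hrow : A i i * d i + ∑ k ∈ univ.erase i, A i k * d k = 0 :=
      (add_sum_erase univ (fun k => A i k * d k) (mem_univ i)).trans hi
    calc ‖A i i‖ * ‖d i‖ = ‖∑ k ∈ univ.erase i, A i k * d k‖ := by
          rw [← norm_mul, eq_neg_of_add_eq_zero_left hrow, norm_neg]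
      _ ≤ ∑ k ∈ univ.erase i, ‖A i k * d k‖ := norm_sum_le _ _
      _ = ∑ k ∈ univ.erase i, ‖A i k‖ * ‖d k‖ := by simp only [norm_mul]
  have hnonneg : ∀ k ∈ univ.erase i, 0 ≤ ‖A i k‖ * (‖d i‖ - ‖d k‖) := fun k _ =>
    mul_nonneg (norm_nonneg _) (sub_nonneg.2 (hmax k))
  have hsum : ∑ k ∈ univ.erase i, ‖A i k‖ * (‖d i‖ - ‖d k‖) ≤ 0 :=
    calc ∑ k ∈ univ.erase i, ‖A i k‖ * (‖d i‖ - ‖d k‖)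
        = (∑ k ∈ univ.erase i, ‖A i k‖) * ‖d i‖ - ∑ k ∈ univ.erase i, ‖A i k‖ * ‖d k‖ := by
          simp only [mul_sub, sum_sub_distrib, sum_mul]
      _ ≤ ‖A i i‖ * ‖d i‖ - ‖A i i‖ * ‖d i‖ := by
          gcongr
          exact hA i
      _ = 0 := sub_self _
  have hji : j ∈ univ.erase i := mem_erase.2 ⟨by rintro rfl; exact hj.false, mem_univ j⟩
  have hterm := (sum_eq_zero_iff_of_nonneg hnonneg).1 (hsum.antisymm (sum_nonneg hnonneg)) j hji
  exact norm_eq_zero.1 ((mul_eq_zero.1 hterm).resolve_right (sub_pos.2 hj).ne')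

lemma exists_forall_norm_le_and_mulVec_ne_zero (hA : IsRowDiagDominant A) (hInv : IsUnit A)
    {d : ι → 𝕜} (hd : d ≠ 0) : ∃ i, (∀ j, ‖d j‖ ≤ ‖d i‖) ∧ (A *ᵥ d) i ≠ 0 := by
  classical
  by_contra! hzero
  obtain ⟨k, hk⟩ := Function.ne_iff.1 hd
  have : Nonempty ι := ⟨k⟩
  obtain ⟨i₀, hi₀⟩ := Finite.exists_max fun i => ‖d i‖
  let S : Finset ι := {i | ∀ j, ‖d j‖ ≤ ‖d i‖}
  have hmax : ∀ i ∈ S, ∀ j, ‖d j‖ ≤ ‖d i‖ := fun i hi => (mem_filter.1 hi).2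
  have hblock : ∀ i ∈ S, ∀ j ∉ S, A i j = 0 := fun i hi j hj => by
    obtain ⟨l, hl⟩ : ∃ l, ‖d j‖ < ‖d l‖ := by simpa [S] using hj
    exact hA.apply_eq_zero_of_norm_lt (hmax i hi) (hzero i (hmax i hi)) (hl.trans_le (hmax i hi l))
  have hdi₀ : d i₀ ≠ 0 := fun h =>
    hk <| norm_le_zero_iff.1 <| (hi₀ k).trans_eq <| norm_eq_zero.2 h
  exact ((isUnit_iff_isUnit_det A).1 hInv).ne_zero <|
    det_eq_zero_of_block_mulVec_eq_zero hblock (fun i hi => hzero i (hmax i hi))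
      ⟨i₀, mem_filter.2 ⟨mem_univ _, hi₀⟩, hdi₀⟩

theorem norm_le_of_mulVec_eq_zero (hA : IsRowDiagDominant A) (hInv : IsUnit A) {F : Finset ι}
    {d : ι → 𝕜} {θ : ℝ} (hθ : 0 ≤ θ) (hF : ∀ i ∈ F, (A *ᵥ d) i = 0) (hd : ∀ i ∉ F, ‖d i‖ ≤ θ)
    (i : ι) : ‖d i‖ ≤ θ := by
  rcases eq_or_ne d 0 with rfl | hd₀
  · simpa using hθ
  · obtain ⟨k, hmax, hk⟩ := hA.exists_forall_norm_le_and_mulVec_ne_zero hInv hd₀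
    exact (hmax i).trans (hd k fun hkF => hk (hF k hkF))

lemma isUnit_submatrix (hA : IsRowDiagDominant A) (hInv : IsUnit A) (F : Finset ι) :
    IsUnit (A.submatrix Subtype.val Subtype.val : Matrix F F 𝕜) := by
  rw [isUnit_iff_isUnit_det, isUnit_iff_ne_zero]
  intro hdet
  obtain ⟨w, hw, hker⟩ := exists_mulVec_eq_zero_iff.2 hdet
  let v : ι → 𝕜 := Function.extend Subtype.val w fun _ => 0
  have hvF : ∀ i : F, v i = w i := Subtype.val_injective.extend_apply w _
  have hv : ∀ i ∉ F, v i = 0 := fun i hi =>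
    Function.extend_apply' w _ i fun ⟨j, hj⟩ => hi (hj ▸ j.2)
  have hAv : ∀ i ∈ F, (A *ᵥ v) i = 0 := fun i hi => by
    rw [← submatrix_mulVec_restrict A Subtype.val (i := (⟨i, hi⟩ : F)) fun j hj => by
      rw [hv j hj, mul_zero], funext hvF, hker, Pi.zero_apply]
  refine hw (funext fun i => norm_le_zero_iff.1 ?_)
  rw [← hvF i]
  exact hA.norm_le_of_mulVec_eq_zero hInv le_rfl hAv (fun j hj => (norm_eq_zero.2 (hv j hj)).le) i

theorem norm_sub_le_of_zero_out (hA : IsRowDiagDominant A) (hInv : IsUnit A) {b x y : ι → 𝕜}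
    (hx : x = A⁻¹ *ᵥ b) {θ : ℝ} (hθ : 0 ≤ θ) {F : Finset ι} (hxF : ∀ i ∉ F, ‖x i‖ ≤ θ)
    (hy : ∀ i ∉ F, y i = 0)
    (hyF : ∀ i : F, y i = ((A.submatrix Subtype.val Subtype.val)⁻¹ *ᵥ fun j : F => b j) i) (i : ι) :
    ‖y i - x i‖ ≤ θ := by
  have hAx : A *ᵥ x = b := by rw [hx, mulVec_inv_mulVec hInv]
  have hAyF : (A.submatrix Subtype.val Subtype.val *ᵥ fun j : F => y j) = fun j : F => b j := by
    rw [funext hyF, mulVec_inv_mulVec (hA.isUnit_submatrix hInv F)]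
  have hAy : ∀ i ∈ F, (A *ᵥ y) i = b i := fun i hi =>
    (submatrix_mulVec_restrict A Subtype.val (i := (⟨i, hi⟩ : F)) fun j hj => by
      rw [hy j hj, mul_zero]).symm.trans (congrFun hAyF ⟨i, hi⟩)
  have hresidual : ∀ i ∈ F, (A *ᵥ (y - x)) i = 0 := fun i hi => by
    rw [mulVec_sub, Pi.sub_apply, hAy i hi, hAx, sub_self]
  have hoff : ∀ i ∉ F, ‖(y - x) i‖ ≤ θ := fun i hi => by simpa [hy i hi] using hxF i hi
  exact hA.norm_le_of_mulVec_eq_zero hInv hθ hresidual hoff i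

end IsRowDiagDominant

end DiagonalDominance

section EuclideanNorm

lemma l2norm_eq_norm_toLp {n : ℕ} (v : Fin n → ℝ) : l2norm v = ‖WithLp.toLp 2 v‖ := by
  simp only [l2norm, EuclideanSpace.norm_eq, Real.norm_eq_abs, sq_abs]

lemma norm_toLp_two_le_sqrt_card_mul {ι E : Type*} [Fintype ι] [SeminormedAddCommGroup E]
    {v : ι → E} {θ : ℝ} (hθ : 0 ≤ θ) (hv : ∀ i, ‖v i‖ ≤ θ) :
    ‖WithLp.toLp 2 v‖ ≤ √(Fintype.card ι) * θ :=
  calc ‖WithLp.toLp 2 v‖ = √(∑ i, ‖v i‖ ^ 2) := PiLp.norm_eq_of_L2 _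
    _ ≤ √(∑ _i : ι, θ ^ 2) := by gcongr with i; exact hv i
    _ = √(Fintype.card ι) * θ := by
      rw [sum_const, card_univ, nsmul_eq_mul, Real.sqrt_mul (Nat.cast_nonneg _), Real.sqrt_sq hθ]

lemma sqrt_natCast_le_pow_mul (n : ℕ) {k U : ℕ} (hk : k ≠ 0) (hU : 1 ≤ U) :
    √(n : ℝ) ≤ (n : ℝ) ^ k * U := by
  refine Real.sqrt_le_iff.2 ⟨by positivity, ?_⟩
  have hle : n ≤ (n ^ k * U) ^ 2 :=
    calc n ≤ n ^ k := Nat.le_self_pow hk n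
      _ ≤ n ^ k * U := Nat.le_mul_of_pos_right _ hU
      _ ≤ (n ^ k * U) ^ 2 := Nat.le_self_pow two_ne_zero _
  exact_mod_cast hle

end EuclideanNorm

theorem zero_out_small_entries_general {ι 𝕜 : Type*} [Fintype ι] [DecidableEq ι] [NormedField 𝕜]
    {A : Matrix ι ι 𝕜} (hA : IsRowDiagDominant A) (hInv : IsUnit A) {b x y : ι → 𝕜}
    (hx : x = A⁻¹ *ᵥ b) {θ : ℝ} (hθ : 0 ≤ θ) {F : Finset ι} (hxF : ∀ i ∉ F, ‖x i‖ ≤ θ)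
    (hy : ∀ i ∉ F, y i = 0)
    (hyF : ∀ i : F, y i = ((A.submatrix Subtype.val Subtype.val)⁻¹ *ᵥ fun j : F => b j) i) :
    ‖WithLp.toLp 2 (y - x)‖ ≤ √(Fintype.card ι) * θ :=
  norm_toLp_two_le_sqrt_card_mul hθ (hA.norm_sub_le_of_zero_out hInv hx hθ hxF hy hyF)

/-- Zeroing out small entries of the solution of an SDDM system and solving the reduced
system on the remaining coordinates `F = [n] \ C` incurs ℓ₂ error at most `n³·U·θ`. -/
theorem zero_out_small_entries {n : ℕ} (U : ℕ) (hU : 1 ≤ U)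
    (L : Matrix (Fin n) (Fin n) ℝ) (hL : IsRDDL L) (hSym : L.IsSymm) (hInv : IsUnit L)
    (hint : ∀ i j, ∃ z : ℤ, L i j = (z : ℝ) ∧ |z| ≤ (U : ℤ))
    (b : Fin n → ℝ) (x : Fin n → ℝ) (hx : x = L⁻¹ *ᵥ b)
    (θ : ℝ) (hθ : 0 < θ)
    (C : Finset (Fin n)) (hC : ∀ i ∈ C, |x i| ≤ θ)
    (y : Fin n → ℝ)
    (hyC : ∀ i ∈ C, y i = 0)
    (hyF : ∀ i : {i // i ∈ Cᶜ},
      y i.val = ((submatrixOn L Cᶜ Cᶜ)⁻¹ *ᵥ fun j : {j // j ∈ Cᶜ} => b j.val) i) :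
    l2norm (y - x) ≤ (n : ℝ) ^ 3 * U * θ := by
  rw [l2norm_eq_norm_toLp]
  exact (zero_out_small_entries_general hL.isRowDiagDominant hInv hx hθ.le (F := Cᶜ)
    (by simpa using hC) (by simpa using hyC) hyF).trans <|
    mul_le_mul_of_nonneg_right (by simpa using sqrt_natCast_le_pow_mul n three_ne_zero hU) hθ.le
end

section
/- Let L be an n×n invertible SDDM matrix with integer entries in [−U, U] for some integer U ≥ 1, let b ∈ ℝ^n be a nonnegative vector, and set x := L^{-1}b. Let F ⊆ [n] be a set containing the support { i : b_i > 0 } of b, and let C := [n] \ F. Let ∂F := { i ∈ F : ∃ j ∈ C with L_{ij} ≠ 0 } be the inner boundary of F, and let Δ := max_{u ∈ ∂F} ((L_{F,F})^{-1} b_F)_u, with the convention Δ := 0 if ∂F = ∅. Then for every i ∈ C, x_i ≤ n³·U·Δ. -/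
open Matrix

/-!
Extend the reduced solution `w` by zero to a vector `y`. Then `z := L⁻¹ b - y` agrees with `L⁻¹ b`
off `F`, and `L z` vanishes on `F`, while off `F` its entries are at most
`∑ u, |L i u| * w u ≤ n * U * Δ`, the sum being over the inner boundary.

It remains to bound the entries of a vector `z` by the partial sums of `L z`. For a superlevel set
`S = {z ≥ s}` such that `z ≤ t` off `S`, where `t ≥ 0`, diagonal dominance of rows and columns gives
`(s - t) * ∑ L_{S,S} ≤ ∑ a ∈ S, (L z) a`. The sum of the entries of `L_{S,S}` is a positive integer
because `L` is invertible, so consecutive nonnegative values of `z`, starting from `0`, differ by at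
most the largest partial sum of `L z`, and `z` takes at most `n` values.
-/

section General

variable {ι κ R : Type*} [Fintype ι] [Fintype κ]

theorem mulVec_extend_zero [NonUnitalNonAssocSemiring R] (A : Matrix ι ι R) {e : κ → ι}
    (he : e.Injective) (v : κ → R) :
    A *ᵥ Function.extend e v 0 = A.submatrix id e *ᵥ v := by
  ext i
  refine (Fintype.sum_of_injective e he _ _ (fun j hj => ?_) fun k => ?_).symm
  · rw [Function.extend_apply' _ _ _ hj, Pi.zero_apply, mul_zero]
  · exact congrArg (A i (e k) * ·) (he.extend_apply v 0 k).symm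

theorem det_eq_zero_of_block_sum_eq_zero [CommRing R] [IsDomain R] [DecidableEq ι]
    {A : Matrix ι ι R} {p : ι → Prop} [DecidablePred p] (hp : ∃ i, p i)
    (hblock : ∀ i, p i → ∀ j, ¬p j → A i j = 0) (hsum : ∀ i, p i → ∑ j : {j // p j}, A i j = 0) :
    A.det = 0 := by
  have : Nonempty {i // p i} := nonempty_subtype.2 hp
  rw [twoBlockTriangular_det' A p hblock]
  refine mul_eq_zero_of_left (exists_mulVec_eq_zero_iff.1 ⟨1, one_ne_zero, funext fun i => ?_⟩) _
  simpa [mulVec, dotProduct, toSquareBlockProp_def] using hsum i i.2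

/-- A square matrix `A` over an ordered ring is inverse monotone (monotone in the sense of Collatz)
if `A v ≥ 0` implies `v ≥ 0`. Over an ordered field this says that `A` is invertible with an
entrywise nonnegative inverse; phrasing it without `A⁻¹` lets invertibility be a consequence. -/
def InverseMonotone [NonUnitalNonAssocSemiring R] [LE R] (A : Matrix ι ι R) : Prop :=
  ∀ v, 0 ≤ A *ᵥ v → 0 ≤ v

namespace InverseMonotone

variable [Field R] [LinearOrder R] [IsOrderedAddMonoid R] [DecidableEq ι] {A : Matrix ι ι R}

theorem isUnit (hA : InverseMonotone A) : IsUnit A := by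
  have nonneg_sub {v w : ι → R} (h : A *ᵥ v = A *ᵥ w) : 0 ≤ v - w :=
    hA _ (by rw [mulVec_sub, h, sub_self])
  refine mulVec_injective_iff_isUnit.1 fun v w h => le_antisymm ?_ ?_
  · exact sub_nonneg.1 (nonneg_sub h.symm)
  · exact sub_nonneg.1 (nonneg_sub h)

theorem mulVec_inv_mulVec (hA : InverseMonotone A) (b : ι → R) : A *ᵥ (A⁻¹ *ᵥ b) = b := by
  rw [mulVec_mulVec, mul_nonsing_inv _ ((isUnit_iff_isUnit_det A).1 hA.isUnit), one_mulVec]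

theorem inv_mulVec_nonneg (hA : InverseMonotone A) {b : ι → R} (hb : 0 ≤ b) : 0 ≤ A⁻¹ *ᵥ b :=
  hA _ (by rwa [hA.mulVec_inv_mulVec])

end InverseMonotone

theorem neg_dotProduct_le_card_mul [CommRing R] [LinearOrder R] [IsOrderedRing R]
    {r w : ι → R} {U Δ : R} (hr : ∀ i, r i ≤ 0) (hrU : ∀ i, -r i ≤ U) (hΔ : 0 ≤ Δ)
    (hw : ∀ i, r i ≠ 0 → w i ≤ Δ) : -(r ⬝ᵥ w) ≤ Fintype.card ι * (U * Δ) := by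
  have hterm (i : ι) : -r i * w i ≤ U * Δ := by
    refine le_trans ?_ (mul_le_mul_of_nonneg_right (hrU i) hΔ)
    rcases eq_or_ne (r i) 0 with hzero | hne
    · simp [hzero]
    · exact mul_le_mul_of_nonneg_left (hw i hne) (neg_nonneg.2 (hr i))
  rw [← neg_dotProduct]
  simpa [dotProduct] using Finset.sum_le_card_nsmul Finset.univ _ _ fun i _ => hterm i

theorem le_card_mul_of_gap_le [Semiring R] [LinearOrder R] [IsOrderedRing R] {g : ι → R} {K : R}
    (hK : 0 ≤ K) (hgap : ∀ i t, 0 ≤ t → (∀ k, g k < g i → g k ≤ t) → g i ≤ t + K) (i : ι) :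
    g i ≤ Fintype.card ι * K := by
  let below (i : ι) : Finset ι := {k | g k < g i}
  have card_below_succ_mul_le {s : Finset ι} {k : ι} (hk : k ∈ s) (hs : below k ⊆ s) :
      ((below k).card + 1 : R) * K ≤ s.card * K := by
    have hlt : (below k).card + 1 ≤ s.card :=
      Finset.card_lt_card ((Finset.ssubset_iff_of_subset hs).2 ⟨k, hk, by simp [below]⟩)
    exact mul_le_mul_of_nonneg_right (mod_cast Nat.mono_cast (α := R) hlt) hK
  have le_below (i : ι) : g i ≤ ((below i).card + 1) * K := by
    induction i using (Finite.wellFounded_of_trans_of_irrefl (InvImage (· < ·) g)).induction with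
    | _ i ih =>
      rw [add_mul, one_mul]
      refine hgap i _ (mul_nonneg (Nat.cast_nonneg _) hK) fun k hki => (ih k hki).trans ?_
      exact card_below_succ_mul_le (by simpa [below] using hki) fun l hl => by
        simp only [below, Finset.mem_filter_univ] at hl ⊢
        exact hl.trans hki
  exact (le_below i).trans (card_below_succ_mul_le (Finset.mem_univ i) (Finset.subset_univ _))

end General

namespace IsRDDL

variable {ι κ : Type*} [Fintype ι] [DecidableEq ι] [Fintype κ] {L : Matrix ι ι ℝ}

theorem sum_nonpos_of_notMem (hL : IsRDDL L) {S : Finset ι} {i : ι} (hi : i ∉ S) :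
    ∑ j ∈ S, L i j ≤ 0 :=
  Finset.sum_nonpos fun j hj => hL.2.1 i j (ne_of_mem_of_not_mem hj hi).symm

theorem sum_nonneg_of_mem (hL : IsRDDL L) {S : Finset ι} {i : ι} (hi : i ∈ S) :
    0 ≤ ∑ j ∈ S, L i j := by
  have hneg : -∑ j ∈ S.erase i, L i j ≤ L i i :=
    calc -∑ j ∈ S.erase i, L i j
        ≤ ∑ j ∈ S.erase i, |L i j| := (neg_le_abs _).trans (Finset.abs_sum_le_sum_abs _ _)
      _ ≤ ∑ j ∈ Finset.univ.erase i, |L i j| :=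
        Finset.sum_le_sum_of_subset_of_nonneg (Finset.erase_subset_erase i S.subset_univ)
          fun j _ _ => abs_nonneg _
      _ ≤ L i i := hL.2.2 i
  rw [← Finset.add_sum_erase S _ hi]
  linarith

theorem exists_mem_sum_pos (hL : IsRDDL L) (hinv : IsUnit L) {S : Finset ι} (hS : S.Nonempty) :
    ∃ i ∈ S, 0 < ∑ j ∈ S, L i j := by
  by_contra! hle
  have hzero {i : ι} (hi : i ∈ S) : ∑ j ∈ S, L i j = 0 :=
    (hle i hi).antisymm (hL.sum_nonneg_of_mem hi)
  have hclosed : ∀ i, i ∈ S → ∀ j, j ∉ S → L i j = 0 := fun i hi j hj => by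
    refine (hL.2.1 i j (ne_of_mem_of_not_mem hi hj)).antisymm ?_
    have := hL.sum_nonneg_of_mem (Finset.mem_insert_of_mem (b := j) hi)
    rwa [Finset.sum_insert hj, hzero hi, add_zero] at this
  refine ((isUnit_iff_isUnit_det L).1 hinv).ne_zero (det_eq_zero_of_block_sum_eq_zero hS hclosed ?_)
  exact fun i hi => (Finset.sum_subtype S (fun _ => Iff.rfl) (L i)).symm.trans (hzero hi)

theorem sum_sum_pos (hL : IsRDDL L) (hinv : IsUnit L) {S : Finset ι} (hS : S.Nonempty) :
    0 < ∑ i ∈ S, ∑ j ∈ S, L i j :=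
  Finset.sum_pos' (fun _ => hL.sum_nonneg_of_mem) (hL.exists_mem_sum_pos hinv hS)

theorem one_le_sum_sum (hL : IsRDDL L) (hinv : IsUnit L) (hint : ∀ i j, ∃ z : ℤ, L i j = z)
    {S : Finset ι} (hS : S.Nonempty) : 1 ≤ ∑ i ∈ S, ∑ j ∈ S, L i j := by
  choose z hz using hint
  have hpos := hL.sum_sum_pos hinv hS
  simp only [hz] at hpos ⊢
  exact_mod_cast hpos

theorem nonneg_of_mulVec_nonneg (hL : IsRDDL L) (hinv : IsUnit L) {v : ι → ℝ}
    (hv : ∀ i, v i < 0 → 0 ≤ (L *ᵥ v) i) : 0 ≤ v := by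
  by_contra hneg
  obtain ⟨k, hk⟩ : ∃ k, v k < 0 := by simpa [Pi.le_def] using hneg
  obtain ⟨m, -, hmin⟩ := Finset.univ.exists_min_image v ⟨k, Finset.mem_univ k⟩
  have hm : v m < 0 := (hmin k (Finset.mem_univ k)).trans_lt hk
  obtain ⟨i, hi, hpos⟩ := hL.exists_mem_sum_pos hinv (S := {i | v i = v m}) ⟨m, by simp⟩
  have hi : v i = v m := by simpa using hi
  have hsplit : (L *ᵥ v) i = ∑ j, L i j * (v j - v m) + v m * ∑ j, L i j := by
    simp only [mulVec, dotProduct, mul_sub, Finset.sum_sub_distrib, ← Finset.sum_mul]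
    ring
  have hterm : ∀ j ∈ Finset.univ, L i j * (v j - v m) ≤ 0 := fun j hj => by
    rcases eq_or_ne i j with rfl | hij
    · simp [hi]
    · exact mul_nonpos_of_nonpos_of_nonneg (hL.2.1 i j hij) (sub_nonneg.2 (hmin j hj))
  have hrow : v m * ∑ j, L i j ≤ 0 :=
    mul_nonpos_of_nonpos_of_nonneg hm.le (hL.sum_nonneg_of_mem (Finset.mem_univ i))
  have hsum := Finset.sum_nonpos hterm
  have hvi := hv i (hi ▸ hm)
  have hrow_zero : ∑ j, L i j = 0 :=
    (mul_eq_zero.1 (show v m * ∑ j, L i j = 0 by linarith)).resolve_left hm.ne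
  have hterm_zero := (Finset.sum_eq_zero_iff_of_nonpos hterm).1 (by linarith)
  refine hpos.ne' ((Finset.sum_subset (Finset.subset_univ _) fun j hj hjm => ?_).trans hrow_zero)
  exact (mul_eq_zero.1 (hterm_zero j hj)).resolve_right (sub_ne_zero.2 (by simpa using hjm))

theorem inverseMonotone_submatrix (hL : IsRDDL L) (hinv : IsUnit L) {e : κ → ι}
    (he : e.Injective) : InverseMonotone (L.submatrix e e) := by
  intro v hv
  have hext : 0 ≤ Function.extend e v 0 := hL.nonneg_of_mulVec_nonneg hinv fun i hi => by
    by_cases hrange : ∃ k, e k = i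
    · obtain ⟨k, rfl⟩ := hrange
      rw [mulVec_extend_zero L he]
      exact hv k
    · simp [Function.extend_apply' _ _ _ hrange] at hi
  exact fun k => by simpa [he.extend_apply] using hext (e k)

theorem sub_mul_sum_sum_le_sum_mulVec (hrow : IsRDDL L) (hcol : IsRDDL Lᵀ) {g : ι → ℝ}
    {S : Finset ι} {s t : ℝ} (ht : 0 ≤ t) (hmem : ∀ i ∈ S, s ≤ g i)
    (hnotMem : ∀ i ∉ S, g i ≤ t) :
    (s - t) * ∑ i ∈ S, ∑ j ∈ S, L i j ≤ ∑ i ∈ S, (L *ᵥ g) i := by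
  have hterm (j : ι) : (if j ∈ S then (s - t) * ∑ i ∈ S, L i j else 0) + t * ∑ i ∈ S, L i j
      ≤ g j * ∑ i ∈ S, L i j := by
    split_ifs with hj
    · rw [← add_mul, sub_add_cancel]
      exact mul_le_mul_of_nonneg_right (hmem j hj) (hcol.sum_nonneg_of_mem hj)
    · rw [zero_add]
      exact mul_le_mul_of_nonpos_right (hnotMem j hj) (hcol.sum_nonpos_of_notMem hj)
  have hrows : 0 ≤ t * ∑ j, ∑ i ∈ S, L i j := by
    rw [Finset.sum_comm]
    exact mul_nonneg ht (Finset.sum_nonneg fun i _ => hrow.sum_nonneg_of_mem (Finset.mem_univ i))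
  calc (s - t) * ∑ i ∈ S, ∑ j ∈ S, L i j
      ≤ (s - t) * ∑ i ∈ S, ∑ j ∈ S, L i j + t * ∑ j, ∑ i ∈ S, L i j :=
        le_add_of_nonneg_right hrows
    _ = ∑ j, ((if j ∈ S then (s - t) * ∑ i ∈ S, L i j else 0) + t * ∑ i ∈ S, L i j) := by
        rw [Finset.sum_add_distrib, Finset.sum_ite_mem, Finset.univ_inter, ← Finset.mul_sum,
          ← Finset.mul_sum, Finset.sum_comm (s := S)]
    _ ≤ ∑ j, g j * ∑ i ∈ S, L i j := Finset.sum_le_sum fun j _ => hterm j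
    _ = ∑ i ∈ S, (L *ᵥ g) i := by
        simp only [mulVec, dotProduct, mul_comm (g _), Finset.sum_mul]
        exact Finset.sum_comm

theorem le_card_mul_of_sum_mulVec_le (hrow : IsRDDL L) (hcol : IsRDDL Lᵀ) (hinv : IsUnit L)
    (hint : ∀ i j, ∃ z : ℤ, L i j = z) {g : ι → ℝ} {K : ℝ}
    (hK : ∀ S : Finset ι, ∑ i ∈ S, (L *ᵥ g) i ≤ K) (i : ι) : g i ≤ Fintype.card ι * K := by
  have hK₀ : 0 ≤ K := by simpa using hK ∅
  refine le_card_mul_of_gap_le hK₀ (fun i t ht hbelow => ?_) i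
  rcases le_total (g i) t with hit | hti
  · linarith
  let S : Finset ι := {k | g i ≤ g k}
  have hcut : (g i - t) * ∑ a ∈ S, ∑ k ∈ S, L a k ≤ K :=
    (hrow.sub_mul_sum_sum_le_sum_mulVec hcol ht (fun k hk => by simpa [S] using hk)
      fun k hk => hbelow k (by simpa [S] using hk)).trans (hK S)
  have hone : 1 ≤ ∑ a ∈ S, ∑ k ∈ S, L a k := hrow.one_le_sum_sum hinv hint ⟨i, by simp [S]⟩
  linarith [le_mul_of_one_le_right (sub_nonneg.2 hti) hone]

theorem mulVec_sub_extend_le (hL : IsRDDL L) {U Δ : ℝ} (hLU : ∀ i j, |L i j| ≤ U)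
    (hΔ : 0 ≤ Δ) {F : Finset ι} {x : ι → ℝ} {w : {i // i ∈ F} → ℝ}
    (hx : ∀ i ∉ F, (L *ᵥ x) i ≤ 0)
    (hxw : ∀ i : {i // i ∈ F}, (L *ᵥ x) i = (L.submatrix Subtype.val Subtype.val *ᵥ w) i)
    (hw : ∀ u : {i // i ∈ F}, (∃ j ∉ F, L j u ≠ 0) → w u ≤ Δ) (i : ι) :
    (L *ᵥ (x - Function.extend Subtype.val w 0)) i ≤ Fintype.card ι * (U * Δ) := by
  have hUΔ : 0 ≤ U * Δ := mul_nonneg ((abs_nonneg _).trans (hLU i i)) hΔ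
  rw [mulVec_sub, mulVec_extend_zero L Subtype.val_injective, Pi.sub_apply]
  by_cases hi : i ∈ F
  · rw [hxw ⟨i, hi⟩]
    exact (sub_self _).trans_le (by positivity)
  · have hflow : -((fun u : {i // i ∈ F} => L i u) ⬝ᵥ w) ≤ Fintype.card {i // i ∈ F} * (U * Δ) :=
      neg_dotProduct_le_card_mul (fun u => hL.2.1 i u (ne_of_mem_of_not_mem u.2 hi).symm)
        (fun u => (neg_le_abs _).trans (hLU i u)) hΔ fun u hu => hw u ⟨i, hi, hu⟩
    calc (L *ᵥ x) i - (L.submatrix id Subtype.val *ᵥ w) i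
        ≤ -((fun u : {i // i ∈ F} => L i u) ⬝ᵥ w) :=
          (sub_le_sub_right (hx i hi) _).trans_eq (zero_sub _)
      _ ≤ Fintype.card {i // i ∈ F} * (U * Δ) := hflow
      _ ≤ Fintype.card ι * (U * Δ) :=
          mul_le_mul_of_nonneg_right (mod_cast Fintype.card_subtype_le _) hUΔ

end IsRDDL

theorem boundary_upper_bound_general {ι : Type*} [Fintype ι] [DecidableEq ι] {U : ℕ}
    {L : Matrix ι ι ℝ} (hrow : IsRDDL L) (hcol : IsRDDL Lᵀ) (hinv : IsUnit L)
    (hint : ∀ i j, ∃ z : ℤ, L i j = z ∧ |z| ≤ (U : ℤ))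
    {F : Finset ι} {b : ι → ℝ} (hsupp : ∀ i, 0 < b i → i ∈ F) {w : {i // i ∈ F} → ℝ}
    (hw : w = (L.submatrix Subtype.val Subtype.val)⁻¹ *ᵥ fun j : {j // j ∈ F} => b j)
    {Δ : ℝ} (hΔ : 0 ≤ Δ) (hwΔ : ∀ u : {i // i ∈ F}, (∃ j ∉ F, L j u ≠ 0) → w u ≤ Δ)
    {i : ι} (hi : i ∉ F) : (L⁻¹ *ᵥ b) i ≤ (Fintype.card ι : ℝ) ^ 3 * U * Δ := by
  have hLU (i j : ι) : |L i j| ≤ U := by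
    obtain ⟨z, hz, hzU⟩ := hint i j
    rw [hz]
    exact_mod_cast hzU
  have hLx : L *ᵥ (L⁻¹ *ᵥ b) = b := by
    rw [mulVec_mulVec, mul_nonsing_inv _ ((isUnit_iff_isUnit_det L).1 hinv), one_mulVec]
  have hLw : L.submatrix Subtype.val Subtype.val *ᵥ w = fun j : {j // j ∈ F} => b j := by
    rw [hw, (hrow.inverseMonotone_submatrix hinv Subtype.val_injective).mulVec_inv_mulVec]
  have hres := hrow.mulVec_sub_extend_le hLU hΔ (x := L⁻¹ *ᵥ b) (w := w)
    (fun j hj => by rw [hLx]; exact not_lt.1 (mt (hsupp j) hj)) (fun j => by rw [hLx, hLw]) hwΔ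
  have hsum (S : Finset ι) : ∑ a ∈ S, (L *ᵥ (L⁻¹ *ᵥ b - Function.extend Subtype.val w 0)) a ≤
      Fintype.card ι * (Fintype.card ι * (U * Δ)) :=
    (Finset.sum_le_card_nsmul S _ _ fun a _ => hres a).trans <| by
      rw [nsmul_eq_mul]
      exact mul_le_mul_of_nonneg_right (mod_cast S.card_le_univ) (by positivity)
  have hbound := hrow.le_card_mul_of_sum_mulVec_le hcol hinv
    (fun i j => (hint i j).imp fun _ => And.left) hsum i
  rw [Pi.sub_apply, Function.extend_apply' _ _ _ (by simpa using hi), Pi.zero_apply,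
    sub_zero] at hbound
  exact hbound.trans_eq (by ring)

open Classical in
/-- For an invertible SDDM matrix `L` with integer entries in `[-U,U]`, a nonnegative
vector `b` whose support is contained in `F`, letting `bd` be the inner boundary of `F`
and `Δ` the maximum of the reduced solution `w = (L_{F,F})⁻¹ b_F` over `bd` (with `Δ = 0`
if `bd = ∅`), every entry of `x = L⁻¹ b` outside `F` is at most `n³·U·Δ`. -/
theorem boundary_upper_bound {n : ℕ} (U : ℕ) (hU : 1 ≤ U)
    (L : Matrix (Fin n) (Fin n) ℝ) (hL : IsRDDL L) (hSym : L.IsSymm) (hInv : IsUnit L)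
    (hint : ∀ i j, ∃ z : ℤ, L i j = (z : ℝ) ∧ |z| ≤ (U : ℤ))
    (b : Fin n → ℝ) (hb : ∀ i, 0 ≤ b i)
    (x : Fin n → ℝ) (hx : x = L⁻¹ *ᵥ b)
    (F : Finset (Fin n)) (hsupp : ∀ i, 0 < b i → i ∈ F)
    (w : {i // i ∈ F} → ℝ)
    (hw : w = (submatrixOn L F F)⁻¹ *ᵥ fun j : {j // j ∈ F} => b j.val)
    (bd : Finset (Fin n))
    (hbd : bd = F.filter fun i => ∃ j, j ∉ F ∧ L i j ≠ 0)
    (Δ : ℝ)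
    (hΔempty : bd = ∅ → Δ = 0)
    (hΔub : ∀ u : {i // i ∈ F}, u.val ∈ bd → w u ≤ Δ)
    (hΔmem : bd.Nonempty → ∃ u : {i // i ∈ F}, u.val ∈ bd ∧ Δ = w u) :
    ∀ i, i ∉ F → x i ≤ (n : ℝ) ^ 3 * U * Δ := by
  have hw₀ : 0 ≤ w := hw ▸
    (hL.inverseMonotone_submatrix hInv Subtype.val_injective).inv_mulVec_nonneg fun j => hb j
  have hΔ : 0 ≤ Δ := by
    rcases bd.eq_empty_or_nonempty with hempty | hne
    · exact (hΔempty hempty).ge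
    · obtain ⟨u, -, rfl⟩ := hΔmem hne
      exact hw₀ u
  have hwΔ (u : {i // i ∈ F}) (hu : ∃ j ∉ F, L j u ≠ 0) : w u ≤ Δ :=
    hΔub u (hbd ▸ Finset.mem_filter.2 ⟨u.2, by simpa only [hSym.apply] using hu⟩)
  intro i hi
  simpa [hx] using boundary_upper_bound_general hL (hSym.symm ▸ hL) hInv hint hsupp hw hΔ hwΔ hi
end
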